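/- arXiv:1303.2337 — 2 statements merged into one kernel-verified Lean document; each statement's English description precedes it below -/
import Mathlib

section
/- Let (X, 𝒰) be a uniform space and M ⊆ X. Then M is totally bounded if and only if every sequence (xₙ) with all xₙ ∈ M admits a Cauchy subnet; formally, M is totally bounded if and only if for every sequence x : ℕ → X with x n ∈ M for all n there exists a nontrivial (NeBot) Cauchy filter F on X with F ≤ Filter.map x Filter.atTop. -/
/-!
Every nontrivial filter containing a totally bounded set has a finer Cauchy filter; apply this to
the filter of a sequence. Conversely, if `M` is not totally bounded, some entourage `V` admits no
finite cover of `M`, so one can greedily choose a sequence in `M` each of whose terms is `V`-far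
from all earlier ones. But a Cauchy filter finer than the filter of a sequence contains a `V`-small
set, which the sequence visits infinitely often, and two such visits give `V`-close terms.
-/

open Filter
open scoped Uniformity

theorem exists_seq_notMem_of_forall_finite_not_isCover {α : Type*} {V : SetRel α α} {s : Set α}
    (h : ∀ t ⊆ s, t.Finite → ¬ V.IsCover s t) :
    ∃ u : ℕ → α, (∀ n, u n ∈ s) ∧ ∀ m n, m < n → (u n, u m) ∉ V := by
  refine exists_seq_of_forall_finset_exists (· ∈ s) (fun y z ↦ (z, y) ∉ V) fun t ht ↦ ?_
  simpa [SetRel.IsCover] using h t ht t.finite_toSet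

section UniformSpace

variable {X : Type*} [UniformSpace X] {s : Set X}

theorem exists_cauchy_le_map_of_totallyBounded {ι : Type*} {l : Filter ι} [l.NeBot] {u : ι → X}
    (hs : TotallyBounded s) (hu : ∀ᶠ i in l, u i ∈ s) : ∃ F : Filter X, Cauchy F ∧ F ≤ map u l := by
  obtain ⟨F, hle, hF⟩ := totallyBounded_iff_filter.1 hs (map u l) inferInstance
    (tendsto_principal.2 hu)
  exact ⟨F, hF, hle⟩

theorem frequently_frequently_mem_of_cauchy_of_le_map {ι : Type*} {l : Filter ι} {u : ι → X}
    {F : Filter X} (hF : Cauchy F) (hle : F ≤ map u l) {V : SetRel X X} (hV : V ∈ 𝓤 X) :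
    ∃ᶠ i in l, ∃ᶠ j in l, (u j, u i) ∈ V := by
  obtain ⟨hF_neBot, hF_small⟩ := cauchy_iff.1 hF
  obtain ⟨A, hA, hAV⟩ := hF_small V hV
  have frequently_mem : ∃ᶠ i in l, u i ∈ A :=
    frequently_map.1 ((Eventually.frequently hA).filter_mono hle)
  exact frequently_mem.mono fun i hi ↦ frequently_mem.mono fun j hj ↦ hAV ⟨hj, hi⟩

theorem totallyBounded_of_forall_seq_exists_lt_mem
    (h : ∀ u : ℕ → X, (∀ n, u n ∈ s) → ∀ V ∈ 𝓤 X, ∃ m n, m < n ∧ (u n, u m) ∈ V) :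
    TotallyBounded s := by
  intro V hV
  by_contra! not_covered
  obtain ⟨u, hus, hu⟩ : ∃ u : ℕ → X, (∀ n, u n ∈ s) ∧ ∀ m n, m < n → (u n, u m) ∉ V := by
    refine exists_seq_notMem_of_forall_finite_not_isCover fun t _ ht ht_cover ↦ not_covered t ht ?_
    simpa [SetRel.IsCover, Set.subset_def] using ht_cover
  obtain ⟨m, n, hmn, hV_mem⟩ := h u hus V hV
  exact hu m n hmn hV_mem

end UniformSpace

/-- A subset `M` of a uniform space is totally bounded iff every sequence from `M`
admits a Cauchy subnet, i.e. a nontrivial Cauchy filter finer than the filter of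
the sequence. -/
theorem totallyBounded_iff_seq_cauchy_subnet {X : Type*} [UniformSpace X] (M : Set X) :
    TotallyBounded M ↔
      ∀ x : ℕ → X, (∀ n, x n ∈ M) →
        ∃ F : Filter X, F.NeBot ∧ Cauchy F ∧ F ≤ Filter.map x Filter.atTop := by
  constructor
  · intro hM x hx
    obtain ⟨F, hF, hle⟩ :=
      exists_cauchy_le_map_of_totallyBounded (l := atTop) hM (.of_forall hx)
    exact ⟨F, hF.1, hF, hle⟩
  · intro h
    refine totallyBounded_of_forall_seq_exists_lt_mem fun x hx V hV ↦ ?_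
    obtain ⟨F, -, hF, hle⟩ := h x hx
    obtain ⟨m, hm⟩ := (frequently_frequently_mem_of_cauchy_of_le_map hF hle hV).exists
    obtain ⟨n, hmn, hnV⟩ := frequently_atTop'.1 hm m
    exact ⟨m, n, hmn, hnV⟩
end

section
/- Let (X, 𝒰) be a compact uniform space satisfying von Neumann's countability axiom (A₀): there exists a sequence of entourages Uₙ ∈ 𝒰, n ∈ ℕ, with ⋂ₙ Uₙ = ⋂ 𝒰 (the intersection of all entourages). Then (X, 𝒰) satisfies the first countability axiom (A₁): there exists a sequence of entourages forming a basis of 𝒰, i.e. the uniformity filter of X is countably generated. -/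
/-!
In a compact space, countably many closed sets generate a filter containing every neighbourhood of
their intersection, since every cluster point of that filter lies in each of them. On `X × X` the
uniformity has a basis of closed entourages, so the sequence of entourages may be shrunk to closed
ones, and a basis of open entourages, so every entourage is a neighbourhood of the intersection of
all entourages. Hence the closed sequence already generates the uniformity.
-/

open Filter Set
open scoped Topology Uniformity

section CompactSpace

variable {Z : Type*} [TopologicalSpace Z] [CompactSpace Z] {ι : Sort*} {C : ι → Set Z}

theorem iInf_principal_le_nhdsSet_iInter (hclosed : ∀ i, IsClosed (C i)) :
    ⨅ i, 𝓟 (C i) ≤ 𝓝ˢ (⋂ i, C i) := by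
  refine isCompact_univ.le_nhdsSet_of_clusterPt univ_mem fun z _ hz => mem_iInter.2 fun i => ?_
  have hzi : ClusterPt z (𝓟 (C i)) := hz.mono (iInf_le _ i)
  exact (hclosed i).closure_subset (mem_closure_iff_clusterPt.2 hzi)

theorem eq_iInf_principal_of_iInter_subset_ker {F : Filter Z} (hF : 𝓝ˢ F.ker ≤ F)
    (hclosed : ∀ i, IsClosed (C i)) (hmem : ∀ i, C i ∈ F) (hker : ⋂ i, C i ⊆ F.ker) :
    F = ⨅ i, 𝓟 (C i) := by
  refine le_antisymm (le_iInf fun i => le_principal_iff.2 (hmem i)) ?_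
  calc ⨅ i, 𝓟 (C i) ≤ 𝓝ˢ (⋂ i, C i) := iInf_principal_le_nhdsSet_iInter hclosed
    _ ≤ 𝓝ˢ F.ker := nhdsSet_mono hker
    _ ≤ F := hF

end CompactSpace

section UniformSpace

variable {X : Type*} [UniformSpace X]

theorem nhdsSet_ker_uniformity_le : 𝓝ˢ (𝓤 X).ker ≤ 𝓤 X :=
  uniformity_hasBasis_open.ge_iff.2 fun _ ⟨hmem, hopen⟩ =>
    hopen.mem_nhdsSet.2 (sInter_subset_of_mem hmem)

theorem isCountablyGenerated_uniformity_of_iInter_subset_ker [CompactSpace X] {ι : Sort*}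
    [Countable ι] {U : ι → Set (X × X)} (hU : ∀ i, U i ∈ 𝓤 X) (hker : ⋂ i, U i ⊆ (𝓤 X).ker) :
    (𝓤 X).IsCountablyGenerated := by
  choose C hC hCU using fun i => uniformity_hasBasis_closed.mem_iff.1 (hU i)
  have hgen : 𝓤 X = ⨅ i, 𝓟 (C i) :=
    eq_iInf_principal_of_iInter_subset_ker nhdsSet_ker_uniformity_le (fun i => (hC i).2)
      (fun i => (hC i).1) ((iInter_mono hCU).trans hker)
  rw [hgen]
  infer_instance

end UniformSpace

/-- A compact uniform space satisfying von Neumann's countability axiom `(A₀)`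
(there is a sequence of entourages whose intersection is the intersection of all
entourages) satisfies the first countability axiom `(A₁)`: some sequence of
entourages is a basis of the uniformity. -/
theorem compact_A0_implies_A1 {X : Type*} [UniformSpace X] [CompactSpace X]
    (U : ℕ → Set (X × X)) (hU : ∀ n, U n ∈ uniformity X)
    (hA0 : (⋂ n, U n) = ⋂ V ∈ uniformity X, V) :
    ∃ W : ℕ → Set (X × X), (∀ n, W n ∈ uniformity X) ∧
      ∀ V ∈ uniformity X, ∃ n, W n ⊆ V := by
  have hker : ⋂ n, U n ⊆ (𝓤 X).ker := (hA0.trans (ker_def _).symm).subset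
  have := isCountablyGenerated_uniformity_of_iInter_subset_ker hU hker
  obtain ⟨W, hW⟩ := (𝓤 X).exists_antitone_basis
  exact ⟨W, hW.mem, fun V hV => hW.mem_iff.1 hV⟩
end
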